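/- Distinguished representations, general case (Lemma 'distinguished'): in the setting of the boundary quadruple for divergence free b, for every f ∈ D(∂_B^⊥) with key representation f = j g + U^{-1}(∂u) + w and z := ∂_B^⊥ f − U^{-1}(∂g) ∈ ker ∂^⊥, there exists a single constant c ∈ ℝ such that G₋f = ((1/√2)(g+c+n_B(fb)) on B̊, (du)_B/|n_B b| + c on B̌, n_B(fb)/|n_B b| on B̂, (1/√2)(w − c·U^{-1}v + z)) and G₊f = ((1/√2)(g+c−n_B(fb)) on B̊, n_B(fb)/|n_B b| on B̌, (du)_B/|n_B b| − c on B̂, (1/√2)(w − c·U^{-1}v − z)), both read as equalities in H̃± (i.e. the orthogonal projections P₋ and P₊ in the definitions of G₋f and G₊f are simultaneously realized by the shift by c). -/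

import Mathlib

open RealInnerProductSpace ContinuousMap

set_option synthInstance.maxHeartbeats 1000000
set_option maxHeartbeats 1000000

namespace Stmt14

variable {X : Type*} [MetricSpace X] [CompactSpace X]
variable {H : Type*} [NormedAddCommGroup H] [InnerProductSpace ℝ H] [CompleteSpace H]
variable {H₀ : Type*} [NormedAddCommGroup H₀] [InnerProductSpace ℝ H₀] [CompleteSpace H₀]
variable {ι : Type*} [Fintype ι]

/-- elements of `𝒞` vanishing on `B`, i.e. membership in `𝒞_B` -/
def Vanish (𝒞 : Subalgebra ℝ C(X, ℝ)) (B : Set X) (f : 𝒞) : Prop :=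
  ∀ x ∈ B, (f : C(X, ℝ)) x = 0

/-- `d` is the value of the adjoint `∂_B^*` at `v ∈ H` -/
def AdjRel (𝒞 : Subalgebra ℝ C(X, ℝ)) (B : Set X) (par : 𝒞 →ₗ[ℝ] H)
    (j : 𝒞 →ₗ[ℝ] H₀) (v : H) (d : H₀) : Prop :=
  ∀ φ : 𝒞, Vanish 𝒞 B φ → ⟪v, par φ⟫ = ⟪d, j φ⟫

/-- membership in `ker ∂^⊥` -/
def KerDperp (𝒞 : Subalgebra ℝ C(X, ℝ)) (par : 𝒞 →ₗ[ℝ] H) (U : H₀ ≃ₗᵢ[ℝ] H) (w : H₀) : Prop :=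
  ∀ φ : 𝒞, ⟪U w, par φ⟫ = 0

/-- a key representation of `f ∈ D(∂_B^⊥)`, recording the adjoint values `d = ∂_B^*(U f)`
and `eu = ∂_B^*(∂u)` -/
def KeyRep (𝒞 : Subalgebra ℝ C(X, ℝ)) (B : Set X) (par : 𝒞 →ₗ[ℝ] H)
    (j : 𝒞 →ₗ[ℝ] H₀) (U : H₀ ≃ₗᵢ[ℝ] H) (f d : H₀) (g u : 𝒞) (eu w : H₀) : Prop :=
  AdjRel 𝒞 B par j (U f) d ∧
  AdjRel 𝒞 B par j (par u) eu ∧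
  KerDperp 𝒞 par U w ∧
  f = j g + U.symm (par u) + w ∧
  KerDperp 𝒞 par U (-d - U.symm (par g))

/-- the normal part `n_B b` at the boundary point indexed by `i` -/
noncomputable def nb (𝒞 : Subalgebra ℝ C(X, ℝ)) (par : 𝒞 →ₗ[ℝ] H) (ψ : ι → 𝒞) (b : H)
    (i : ι) : ℝ :=
  ⟪b, par (ψ i)⟫

/-- the inner product of `H̃± = ℝ^{B̊} ⊕ ℝ^{B̌} ⊕ ℝ^{B̂} ⊕ ker ∂^⊥` (the three boundary pieces
are encoded as one function on the index set; on `B̌ ∪ B̂` the coordinates are weighted by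
`|n_B b|`) -/
noncomputable def ipW (𝒞 : Subalgebra ℝ C(X, ℝ)) (par : 𝒞 →ₗ[ℝ] H) (ψ : ι → 𝒞) (b : H)
    (p₁ p₂ : (ι → ℝ) × H₀) : ℝ :=
  (∑ i, (if nb 𝒞 par ψ b i = 0 then 1 else |nb 𝒞 par ψ b i|) * (p₁.1 i * p₂.1 i)) +
    ⟪p₁.2, p₂.2⟫

/-- the orthogonal projection onto the orthogonal complement of the span of `e` with respect to
the inner product `ip` -/
noncomputable def projWith (ip : ((ι → ℝ) × H₀) → ((ι → ℝ) × H₀) → ℝ)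
    (e x : (ι → ℝ) × H₀) : (ι → ℝ) × H₀ :=
  x - (ip x e / ip e e) • e

/-- the normal part `n_B(fb)` at the boundary point indexed by `i`, where `d = ∂_B^*(U f)` -/
noncomputable def nfb (𝒞 : Subalgebra ℝ C(X, ℝ)) (par : 𝒞 →ₗ[ℝ] H) (j : 𝒞 →ₗ[ℝ] H₀)
    (U : H₀ ≃ₗᵢ[ℝ] H) (ψ : ι → 𝒞) (f d : H₀) (i : ι) : ℝ :=
  ⟪U f, par (ψ i)⟫ + ⟪-d, j (ψ i)⟫

/-- the normal derivative `(du)_B` at the boundary point indexed by `i`, where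
`eu = ∂_B^*(∂u)` -/
noncomputable def duB (𝒞 : Subalgebra ℝ C(X, ℝ)) (par : 𝒞 →ₗ[ℝ] H) (j : 𝒞 →ₗ[ℝ] H₀)
    (ψ : ι → 𝒞) (u : 𝒞) (eu : H₀) (i : ι) : ℝ :=
  ⟪par u, par (ψ i)⟫ - ⟪eu, j (ψ i)⟫

/-- the vector `((1/√2)𝟏, 𝟏, 0, −(1/√2)U⁻¹v)` spanning the complement of `H₋` -/
noncomputable def eMinus (𝒞 : Subalgebra ℝ C(X, ℝ)) (par : 𝒞 →ₗ[ℝ] H) (ψ : ι → 𝒞) (b : H)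
    (U : H₀ ≃ₗᵢ[ℝ] H) (v : H) : (ι → ℝ) × H₀ :=
  (fun i => if nb 𝒞 par ψ b i = 0 then (Real.sqrt 2)⁻¹
    else if nb 𝒞 par ψ b i < 0 then 1 else 0,
   -((Real.sqrt 2)⁻¹ • U.symm v))

/-- the vector `((1/√2)𝟏, 0, −𝟏, −(1/√2)U⁻¹v)` spanning the complement of `H₊` -/
noncomputable def ePlus (𝒞 : Subalgebra ℝ C(X, ℝ)) (par : 𝒞 →ₗ[ℝ] H) (ψ : ι → 𝒞) (b : H)
    (U : H₀ ≃ₗᵢ[ℝ] H) (v : H) : (ι → ℝ) × H₀ :=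
  (fun i => if nb 𝒞 par ψ b i = 0 then (Real.sqrt 2)⁻¹
    else if nb 𝒞 par ψ b i < 0 then 0 else -1,
   -((Real.sqrt 2)⁻¹ • U.symm v))

/-- `G₋f := P₋((1/√2)(g+n_B(fb))` on `B̊`, `(du)_B/|n_B b|` on `B̌`, `n_B(fb)/|n_B b|` on `B̂`,
`(1/√2)(w+z))` -/
noncomputable def Gminus (𝒞 : Subalgebra ℝ C(X, ℝ)) (par : 𝒞 →ₗ[ℝ] H) (j : 𝒞 →ₗ[ℝ] H₀)
    (U : H₀ ≃ₗᵢ[ℝ] H) (q : ι → X) (ψ : ι → 𝒞) (b : H) (v : H)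
    (f d : H₀) (g u : 𝒞) (eu w : H₀) : (ι → ℝ) × H₀ :=
  projWith (ipW 𝒞 par ψ b) (eMinus 𝒞 par ψ b U v)
    ((fun i => if nb 𝒞 par ψ b i = 0 then
        (Real.sqrt 2)⁻¹ * ((g : C(X, ℝ)) (q i) + nfb 𝒞 par j U ψ f d i)
      else if nb 𝒞 par ψ b i < 0 then duB 𝒞 par j ψ u eu i / |nb 𝒞 par ψ b i|
      else nfb 𝒞 par j U ψ f d i / |nb 𝒞 par ψ b i|),
     (Real.sqrt 2)⁻¹ • (w + (-d - U.symm (par g))))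

/-- `G₊f := P₊((1/√2)(g−n_B(fb))` on `B̊`, `n_B(fb)/|n_B b|` on `B̌`, `(du)_B/|n_B b|` on `B̂`,
`(1/√2)(w−z))` -/
noncomputable def Gplus (𝒞 : Subalgebra ℝ C(X, ℝ)) (par : 𝒞 →ₗ[ℝ] H) (j : 𝒞 →ₗ[ℝ] H₀)
    (U : H₀ ≃ₗᵢ[ℝ] H) (q : ι → X) (ψ : ι → 𝒞) (b : H) (v : H)
    (f d : H₀) (g u : 𝒞) (eu w : H₀) : (ι → ℝ) × H₀ :=
  projWith (ipW 𝒞 par ψ b) (ePlus 𝒞 par ψ b U v)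
    ((fun i => if nb 𝒞 par ψ b i = 0 then
        (Real.sqrt 2)⁻¹ * ((g : C(X, ℝ)) (q i) - nfb 𝒞 par j U ψ f d i)
      else if nb 𝒞 par ψ b i < 0 then nfb 𝒞 par j U ψ f d i / |nb 𝒞 par ψ b i|
      else duB 𝒞 par j ψ u eu i / |nb 𝒞 par ψ b i|),
     (Real.sqrt 2)⁻¹ • (w - (-d - U.symm (par g))))

/-!
Since `U⁻¹b = j 1` and `b = ∂h + v`, every constant `c` satisfies `j c = U⁻¹(c ∂h) + c U⁻¹v`. So
shifting `(g, u, w)` to `(g + c, u - c h, w - c U⁻¹v)` leaves `f` unchanged and moves the vectors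
`x₋`, `x₊` to which `P₋`, `P₊` are applied by `c e₋`, `c e₊`, where `e₋`, `e₊` span the orthogonal
complements of `H₋`, `H₊`. One constant thus realizes both projections as soon as
`⟨e₋, e₋⟩ = ⟨e₊, e₊⟩` and `⟨x₋, e₋⟩ = ⟨x₊, e₊⟩`.

The difference between the two sides of each equation is a value of the boundary form of Green's
identity, because `e₋` and `e₊` themselves come from a key representation, that of `0` with
`(g, u, w) = (1, -h, -U⁻¹v)`. Given `n_B(fb) = g · n_B b + (du)_B` on `B`, the two values are
`-∑ n_B b` and `∑ (du)_B - ⟨z, U⁻¹v⟩`. They vanish because a functional on `𝒞` that annihilates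
`𝒞_B` depends only on the values on `B`, so that summing its values at the `ψ_q` evaluates it
at `1`.
-/

section Projections

variable {κ F : Type*} [NormedAddCommGroup F] [InnerProductSpace ℝ F]

theorem exists_projWith_eq_add_smul {ip : ((κ → ℝ) × F) → ((κ → ℝ) × F) → ℝ}
    {x x' e e' : (κ → ℝ) × F} (hx : ip x e = ip x' e') (he : ip e e = ip e' e') :
    ∃ c : ℝ, projWith ip e x = x + c • e ∧ projWith ip e' x' = x' + c • e' :=
  ⟨-(ip x e / ip e e), by rw [projWith, neg_smul, sub_eq_add_neg],
    by rw [projWith, neg_smul, sub_eq_add_neg, hx, he]⟩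

/-- The inner product of `H̃±` for an arbitrary boundary weight `ν` in place of `n_B b`. -/
noncomputable def weightedInner [Fintype κ] (ν : κ → ℝ) (p₁ p₂ : (κ → ℝ) × F) : ℝ :=
  (∑ i, (if ν i = 0 then 1 else |ν i|) * (p₁.1 i * p₂.1 i)) + ⟪p₁.2, p₂.2⟫

/-- The vector to which `P₋` is applied in the definition of `G₋`, as a function of the boundary
values `ν` of `n_B b`, `γ` of `g`, `n` of `n_B(fb)`, `δ` of `(du)_B`, and of `w, z ∈ ker ∂^⊥`. -/
noncomputable def preGminus (ν γ n δ : κ → ℝ) (w z : F) : (κ → ℝ) × F :=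
  (fun i => if ν i = 0 then (√2)⁻¹ * (γ i + n i)
    else if ν i < 0 then δ i / |ν i| else n i / |ν i|, (√2)⁻¹ • (w + z))

/-- The vector to which `P₊` is applied in the definition of `G₊`; the arguments are those of
`preGminus`. -/
noncomputable def preGplus (ν γ n δ : κ → ℝ) (w z : F) : (κ → ℝ) × F :=
  (fun i => if ν i = 0 then (√2)⁻¹ * (γ i - n i)
    else if ν i < 0 then n i / |ν i| else δ i / |ν i|, (√2)⁻¹ • (w - z))

theorem preGminus_add_smul (ν γ n δ : κ → ℝ) (w y z : F) (c : ℝ) :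
    preGminus ν γ n δ w z + c • preGminus ν 1 0 (-ν) (-y) 0 =
      (fun i => if ν i = 0 then (√2)⁻¹ * (γ i + c + n i)
        else if ν i < 0 then δ i / |ν i| + c else n i / |ν i|,
        (√2)⁻¹ • (w - c • y + z)) := by
  ext1
  · funext i
    rcases lt_trichotomy (ν i) 0 with hneg | hzero | hpos
    · simp [preGminus, hneg, hneg.ne, abs_of_neg]
    · simp only [preGminus, Prod.fst_add, Prod.smul_fst, Pi.add_apply, Pi.smul_apply, hzero,
        if_true, Pi.one_apply, Pi.zero_apply, smul_eq_mul]
      ring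
    · simp [preGminus, hpos.not_gt, hpos.ne']
  · simp only [preGminus, Prod.snd_add, Prod.smul_snd]
    module

theorem preGplus_add_smul (ν γ n δ : κ → ℝ) (w y z : F) (c : ℝ) :
    preGplus ν γ n δ w z + c • preGplus ν 1 0 (-ν) (-y) 0 =
      (fun i => if ν i = 0 then (√2)⁻¹ * (γ i + c - n i)
        else if ν i < 0 then n i / |ν i| else δ i / |ν i| - c,
        (√2)⁻¹ • (w - c • y - z)) := by
  ext1
  · funext i
    rcases lt_trichotomy (ν i) 0 with hneg | hzero | hpos
    · simp [preGplus, hneg, hneg.ne]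
    · simp only [preGplus, Prod.fst_add, Prod.smul_fst, Pi.add_apply, Pi.smul_apply, hzero,
        if_true, Pi.one_apply, Pi.zero_apply, smul_eq_mul]
      ring
    · simp [preGplus, hpos.not_gt, hpos.ne', abs_of_pos hpos, neg_div, sub_eq_add_neg]
  · simp only [preGplus, Prod.snd_add, Prod.smul_snd]
    module

variable [Fintype κ]

theorem weightedInner_preGminus_sub_weightedInner_preGplus {ν γ n δ γ' n' δ' : κ → ℝ}
    (hn : n = γ * ν + δ) (hn' : n' = γ' * ν + δ') (w z w' z' : F) :
    weightedInner ν (preGminus ν γ n δ w z) (preGminus ν γ' n' δ' w' z') -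
        weightedInner ν (preGplus ν γ n δ w z) (preGplus ν γ' n' δ' w' z') =
      ∑ i, (γ i * γ' i * ν i + γ i * δ' i + δ i * γ' i) + (⟪w, z'⟫ + ⟪z, w'⟫) := by
  have half : (√2)⁻¹ * (√2)⁻¹ = (1 / 2 : ℝ) := by
    rw [← mul_inv, Real.mul_self_sqrt zero_le_two, one_div]
  have kernel_part :
      ⟪(preGminus ν γ n δ w z).2, (preGminus ν γ' n' δ' w' z').2⟫ -
        ⟪(preGplus ν γ n δ w z).2, (preGplus ν γ' n' δ' w' z').2⟫ = ⟪w, z'⟫ + ⟪z, w'⟫ := by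
    simp only [preGminus, preGplus, real_inner_smul_left, real_inner_smul_right, inner_add_left,
      inner_add_right, inner_sub_left, inner_sub_right]
    linear_combination 2 * (⟪w, z'⟫ + ⟪z, w'⟫) * half
  rw [weightedInner, weightedInner, add_sub_add_comm, kernel_part, ← Finset.sum_sub_distrib]
  congr 1
  refine Finset.sum_congr rfl fun i _ => ?_
  subst hn hn'
  simp only [preGminus, preGplus, Pi.add_apply, Pi.mul_apply]
  rcases lt_trichotomy (ν i) 0 with hneg | hzero | hpos
  · have : ν i ≠ 0 := hneg.ne
    simp only [hneg, hneg.ne, if_true, if_false, abs_of_neg]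
    field_simp
    ring
  · simp only [hzero, if_true]
    linear_combination 2 * (γ i * δ' i + δ i * γ' i) * half
  · have : ν i ≠ 0 := hpos.ne'
    simp only [hpos.not_gt, hpos.ne', if_false, abs_of_pos hpos]
    field_simp
    ring

theorem exists_projWith_preGminus_preGplus_eq_add_smul {ν γ n δ : κ → ℝ} {y z : F} (w : F)
    (hν : ∑ i, ν i = 0) (hn : n = γ * ν + δ) (hδ : ∑ i, δ i = ⟪z, y⟫) :
    ∃ c : ℝ,
      projWith (weightedInner ν) (preGminus ν 1 0 (-ν) (-y) 0) (preGminus ν γ n δ w z) =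
        preGminus ν γ n δ w z + c • preGminus ν 1 0 (-ν) (-y) 0 ∧
      projWith (weightedInner ν) (preGplus ν 1 0 (-ν) (-y) 0) (preGplus ν γ n δ w z) =
        preGplus ν γ n δ w z + c • preGplus ν 1 0 (-ν) (-y) 0 := by
  have hzero : (0 : κ → ℝ) = 1 * ν + -ν := by rw [one_mul, add_neg_cancel]
  apply exists_projWith_eq_add_smul <;> rw [← sub_eq_zero]
  · rw [weightedInner_preGminus_sub_weightedInner_preGplus hn hzero]
    simp [hδ, inner_neg_right]
  · rw [weightedInner_preGminus_sub_weightedInner_preGplus hzero hzero]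
    simp [hν]

end Projections

section NormalPart

variable {A : Type*} [Ring A] [Module ℝ A]
variable {E F : Type*} [NormedAddCommGroup E] [InnerProductSpace ℝ E]
variable [NormedAddCommGroup F] [InnerProductSpace ℝ F]

theorem map_one_eq_zero_of_leibniz {act : A →ₗ[ℝ] E →ₗ[ℝ] E} {par : A →ₗ[ℝ] E}
    (hact_one : ∀ x, act 1 x = x)
    (hLeibniz : ∀ f g, par (f * g) = act f (par g) + act g (par f)) : par 1 = 0 := by
  simpa [hact_one] using hLeibniz 1 1

/-- The normal part on `𝒞` of a vector `V` with adjoint value `d = ∂_B^* V`: the defect in the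
integration by parts formula `⟨V, ∂φ⟩ = ⟨∂_B^* V, j φ⟩`. -/
noncomputable def normalPart (par : A →ₗ[ℝ] E) (j : A →ₗ[ℝ] F) (V : E) (d : F) : A →ₗ[ℝ] ℝ :=
  innerₗ E V ∘ₗ par - innerₗ F d ∘ₗ j

theorem normalPart_apply (par : A →ₗ[ℝ] E) (j : A →ₗ[ℝ] F) (V : E) (d : F) (φ : A) :
    normalPart par j V d φ = ⟪V, par φ⟫ - ⟪d, j φ⟫ :=
  rfl

theorem normalPart_add (par : A →ₗ[ℝ] E) (j : A →ₗ[ℝ] F) (V V' : E) (d d' : F) :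
    normalPart par j (V + V') (d + d') = normalPart par j V d + normalPart par j V' d' := by
  ext φ
  simp only [normalPart_apply, LinearMap.add_apply, inner_add_left]
  ring

theorem normalPart_act {act : A →ₗ[ℝ] E →ₗ[ℝ] E} {par : A →ₗ[ℝ] E} {j : A →ₗ[ℝ] F}
    {U : F ≃ₗᵢ[ℝ] E} {b : E} (hact_symm : ∀ f x y, ⟪act f x, y⟫ = ⟪x, act f y⟫)
    (hLeibniz : ∀ f g, par (f * g) = act f (par g) + act g (par f))
    (hU : ∀ f, U (j f) = act f b) (g φ : A) :
    normalPart par j (act g b) (-U.symm (par g)) φ = ⟪b, par (g * φ)⟫ := by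
  have hsymm : ⟪U.symm (par g), j φ⟫ = ⟪b, act φ (par g)⟫ := by
    rw [← U.inner_map_map, U.apply_symm_apply, hU, real_inner_comm, hact_symm]
  rw [normalPart_apply, inner_neg_left, hsymm, hact_symm, hLeibniz, inner_add_right, sub_neg_eq_add]

end NormalPart

section KeyRepresentation

variable {Y : Type*} [MetricSpace Y] {𝒞 : Subalgebra ℝ C(Y, ℝ)} {B : Set Y}
variable {E F : Type*} [NormedAddCommGroup E] [InnerProductSpace ℝ E]
variable [NormedAddCommGroup F] [InnerProductSpace ℝ F]
variable {act : 𝒞 →ₗ[ℝ] E →ₗ[ℝ] E} {par : 𝒞 →ₗ[ℝ] E} {j : 𝒞 →ₗ[ℝ] F} {U : F ≃ₗᵢ[ℝ] E}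

theorem Vanish.mul_left {φ : 𝒞} (hφ : Vanish 𝒞 B φ) (g : 𝒞) : Vanish 𝒞 B (g * φ) :=
  fun x hx => by simp [hφ x hx]

theorem adjRel_iff_normalPart {V : E} {d : F} :
    AdjRel 𝒞 B par j V d ↔ ∀ φ, Vanish 𝒞 B φ → normalPart par j V d φ = 0 :=
  forall₂_congr fun _ _ => sub_eq_zero.symm

theorem AdjRel.add {V V' : E} {d d' : F} (h : AdjRel 𝒞 B par j V d)
    (h' : AdjRel 𝒞 B par j V' d') : AdjRel 𝒞 B par j (V + V') (d + d') := fun φ hφ => by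
  rw [inner_add_left, inner_add_left, h φ hφ, h' φ hφ]

theorem AdjRel.unique (hdense : Dense (⇑j '' {φ : 𝒞 | Vanish 𝒞 B φ})) {V : E} {d d' : F}
    (h : AdjRel 𝒞 B par j V d) (h' : AdjRel 𝒞 B par j V d') : d = d' := by
  refine hdense.eq_of_inner_left ℝ ?_
  rintro _ ⟨φ, hφ, rfl⟩
  rw [← h φ hφ, h' φ hφ]

theorem KerDperp.normalPart_eq_zero {w : F} (hw : KerDperp 𝒞 par U w) :
    normalPart par j (U w) 0 = 0 :=
  LinearMap.ext fun φ => by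
    rw [normalPart_apply, hw, inner_zero_left, sub_zero, LinearMap.zero_apply]

theorem KeyRep.map_eq {b : E} (hU : ∀ φ, U (j φ) = act φ b) {f d eu w : F} {g u : 𝒞}
    (hrep : KeyRep 𝒞 B par j U f d g u eu w) : U f = act g b + par u + U w := by
  obtain ⟨-, -, -, hf, -⟩ := hrep
  rw [hf, map_add, map_add, hU, U.apply_symm_apply]

theorem KeyRep.adjoint_eq {b : E} (hact_symm : ∀ φ x y, ⟪act φ x, y⟫ = ⟪x, act φ y⟫)
    (hLeibniz : ∀ φ χ, par (φ * χ) = act φ (par χ) + act χ (par φ))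
    (hdivfree : ∀ φ, Vanish 𝒞 B φ → ⟪b, par φ⟫ = 0)
    (hdense : Dense (⇑j '' {φ : 𝒞 | Vanish 𝒞 B φ})) (hU : ∀ φ, U (j φ) = act φ b)
    {f d eu w : F} {g u : 𝒞} (hrep : KeyRep 𝒞 B par j U f d g u eu w) :
    d = -U.symm (par g) + eu := by
  obtain ⟨hd, heu, hw, -, -⟩ := id hrep
  have hgb : AdjRel 𝒞 B par j (act g b) (-U.symm (par g)) :=
    adjRel_iff_normalPart.2 fun φ hφ => by
      rw [normalPart_act hact_symm hLeibniz hU, hdivfree _ (hφ.mul_left g)]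
  have hUw : AdjRel 𝒞 B par j (U w) 0 :=
    adjRel_iff_normalPart.2 fun φ _ => by rw [hw.normalPart_eq_zero, LinearMap.zero_apply]
  rw [hrep.map_eq hU] at hd
  simpa only [add_zero] using hd.unique hdense ((hgb.add heu).add hUw)

theorem KeyRep.normalPart_eq {b : E} (hact_symm : ∀ φ x y, ⟪act φ x, y⟫ = ⟪x, act φ y⟫)
    (hLeibniz : ∀ φ χ, par (φ * χ) = act φ (par χ) + act χ (par φ))
    (hdivfree : ∀ φ, Vanish 𝒞 B φ → ⟪b, par φ⟫ = 0)
    (hdense : Dense (⇑j '' {φ : 𝒞 | Vanish 𝒞 B φ})) (hU : ∀ φ, U (j φ) = act φ b)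
    {f d eu w : F} {g u : 𝒞} (hrep : KeyRep 𝒞 B par j U f d g u eu w) (φ : 𝒞) :
    normalPart par j (U f) d φ = ⟪b, par (g * φ)⟫ + normalPart par j (par u) eu φ := by
  obtain ⟨-, -, hw, -, -⟩ := id hrep
  rw [hrep.map_eq hU, hrep.adjoint_eq hact_symm hLeibniz hdivfree hdense hU,
    ← add_zero (-U.symm (par g) + eu), normalPart_add, normalPart_add, hw.normalPart_eq_zero,
    add_zero, LinearMap.add_apply, normalPart_act hact_symm hLeibniz hU]

end KeyRepresentation

section FiniteBoundary

variable {Y : Type*} [MetricSpace Y] {𝒞 : Subalgebra ℝ C(Y, ℝ)}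
variable {E F : Type*} [NormedAddCommGroup E] [InnerProductSpace ℝ E]
variable [NormedAddCommGroup F] [InnerProductSpace ℝ F]
variable {κ : Type*} {act : 𝒞 →ₗ[ℝ] E →ₗ[ℝ] E} {par : 𝒞 →ₗ[ℝ] E} {j : 𝒞 →ₗ[ℝ] F}
variable {U : F ≃ₗᵢ[ℝ] E} {q : κ → Y} {ψ : κ → 𝒞} {b v : E} {f d eu w : F} {g u : 𝒞}

theorem map_eq_of_eqOn_range {M : Type*} [AddCommGroup M] {L : 𝒞 →+ M}
    (hL : ∀ φ, Vanish 𝒞 (Set.range q) φ → L φ = 0) {φ χ : 𝒞}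
    (h : ∀ i, (φ : C(Y, ℝ)) (q i) = (χ : C(Y, ℝ)) (q i)) : L φ = L χ := by
  rw [← sub_eq_zero, ← map_sub]
  refine hL _ ?_
  rintro _ ⟨i, rfl⟩
  simp [h i]

theorem map_mul_eq_apply_mul {L : 𝒞 →ₗ[ℝ] ℝ} (hL : ∀ φ, Vanish 𝒞 (Set.range q) φ → L φ = 0)
    (hψ0 : ∀ i i', i ≠ i' → (ψ i : C(Y, ℝ)) (q i') = 0) (g : 𝒞) (i : κ) :
    L (g * ψ i) = (g : C(Y, ℝ)) (q i) * L (ψ i) := by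
  rw [← smul_eq_mul ((g : C(Y, ℝ)) (q i)), ← map_smul]
  refine map_eq_of_eqOn_range (L := L.toAddMonoidHom) hL fun k => ?_
  rcases eq_or_ne i k with rfl | hne
  · simp
  · simp [hψ0 i k hne]

theorem sum_map_eq_map_one [Fintype κ] {M : Type*} [AddCommGroup M] {L : 𝒞 →+ M}
    (hL : ∀ φ, Vanish 𝒞 (Set.range q) φ → L φ = 0)
    (hψ1 : ∀ i, (ψ i : C(Y, ℝ)) (q i) = 1)
    (hψ0 : ∀ i i', i ≠ i' → (ψ i : C(Y, ℝ)) (q i') = 0) : ∑ i, L (ψ i) = L 1 := by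
  rw [← map_sum]
  refine map_eq_of_eqOn_range hL fun k => ?_
  have hsum : ∑ i, (ψ i : C(Y, ℝ)) (q k) = (ψ k : C(Y, ℝ)) (q k) :=
    Fintype.sum_eq_single k fun i hi => hψ0 i k hi
  simpa [hψ1 k] using hsum

theorem sum_nb_eq_zero [Fintype κ] (hpar_one : par 1 = 0)
    (hdivfree : ∀ φ, Vanish 𝒞 (Set.range q) φ → ⟪b, par φ⟫ = 0)
    (hψ1 : ∀ i, (ψ i : C(Y, ℝ)) (q i) = 1)
    (hψ0 : ∀ i i', i ≠ i' → (ψ i : C(Y, ℝ)) (q i') = 0) : ∑ i, nb 𝒞 par ψ b i = 0 := by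
  have hsum := sum_map_eq_map_one (L := (innerₗ E b ∘ₗ par).toAddMonoidHom) hdivfree hψ1 hψ0
  simpa [nb, hpar_one] using hsum

theorem KeyRep.nfb_eq (hact_symm : ∀ φ x y, ⟪act φ x, y⟫ = ⟪x, act φ y⟫)
    (hLeibniz : ∀ φ χ, par (φ * χ) = act φ (par χ) + act χ (par φ))
    (hdivfree : ∀ φ, Vanish 𝒞 (Set.range q) φ → ⟪b, par φ⟫ = 0)
    (hdense : Dense (⇑j '' {φ : 𝒞 | Vanish 𝒞 (Set.range q) φ})) (hU : ∀ φ, U (j φ) = act φ b)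
    (hψ0 : ∀ i i', i ≠ i' → (ψ i : C(Y, ℝ)) (q i') = 0)
    (hrep : KeyRep 𝒞 (Set.range q) par j U f d g u eu w) :
    nfb 𝒞 par j U ψ f d =
      (fun i => (g : C(Y, ℝ)) (q i)) * nb 𝒞 par ψ b + duB 𝒞 par j ψ u eu := by
  funext i
  calc nfb 𝒞 par j U ψ f d i
      = normalPart par j (U f) d (ψ i) := by
        rw [nfb, normalPart_apply, inner_neg_left, sub_eq_add_neg]
    _ = ⟪b, par (g * ψ i)⟫ + normalPart par j (par u) eu (ψ i) :=
        hrep.normalPart_eq hact_symm hLeibniz hdivfree hdense hU (ψ i)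
    _ = (g : C(Y, ℝ)) (q i) * nb 𝒞 par ψ b i + duB 𝒞 par j ψ u eu i :=
        congrArg (· + normalPart par j (par u) eu (ψ i))
          (map_mul_eq_apply_mul (L := innerₗ E b ∘ₗ par) hdivfree hψ0 g i)

theorem sum_duB_eq_neg_inner [Fintype κ] (hpar_one : par 1 = 0)
    (hψ1 : ∀ i, (ψ i : C(Y, ℝ)) (q i) = 1)
    (hψ0 : ∀ i i', i ≠ i' → (ψ i : C(Y, ℝ)) (q i') = 0)
    (heu : AdjRel 𝒞 (Set.range q) par j (par u) eu) :
    ∑ i, duB 𝒞 par j ψ u eu i = -⟪eu, j 1⟫ := by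
  have hsum := sum_map_eq_map_one (L := (normalPart par j (par u) eu).toAddMonoidHom)
    (adjRel_iff_normalPart.1 heu) hψ1 hψ0
  simpa [normalPart_apply, duB, hpar_one] using hsum

theorem KerDperp.inner_eq_of_map_eq_add {h : 𝒞} {z k : F} (hz : KerDperp 𝒞 par U z)
    (hk : U k = par h + v) : ⟪z, k⟫ = ⟪z, U.symm v⟫ := by
  rw [← U.inner_map_map, hk, inner_add_right, hz, zero_add, ← U.inner_map_map z,
    U.apply_symm_apply]

theorem KeyRep.sum_duB_eq_inner [Fintype κ] {h : 𝒞} (hact_one : ∀ x, act 1 x = x)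
    (hact_symm : ∀ φ x y, ⟪act φ x, y⟫ = ⟪x, act φ y⟫)
    (hLeibniz : ∀ φ χ, par (φ * χ) = act φ (par χ) + act χ (par φ))
    (hdivfree : ∀ φ, Vanish 𝒞 (Set.range q) φ → ⟪b, par φ⟫ = 0)
    (hdense : Dense (⇑j '' {φ : 𝒞 | Vanish 𝒞 (Set.range q) φ})) (hU : ∀ φ, U (j φ) = act φ b)
    (hb : b = par h + v)
    (hψ1 : ∀ i, (ψ i : C(Y, ℝ)) (q i) = 1)
    (hψ0 : ∀ i i', i ≠ i' → (ψ i : C(Y, ℝ)) (q i') = 0)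
    (hrep : KeyRep 𝒞 (Set.range q) par j U f d g u eu w) :
    ∑ i, duB 𝒞 par j ψ u eu i = ⟪-d - U.symm (par g), U.symm v⟫ := by
  obtain ⟨-, heu, -, -, hz⟩ := id hrep
  have hz_eq : -d - U.symm (par g) = -eu := by
    rw [hrep.adjoint_eq hact_symm hLeibniz hdivfree hdense hU]
    abel
  have hUj_one : U (j 1) = par h + v := by rw [hU, hact_one, hb]
  rw [← hz.inner_eq_of_map_eq_add hUj_one, hz_eq, inner_neg_left]
  exact sum_duB_eq_neg_inner (map_one_eq_zero_of_leibniz hact_one hLeibniz) hψ1 hψ0 heu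

theorem eMinus_eq_preGminus :
    eMinus 𝒞 par ψ b U v = preGminus (nb 𝒞 par ψ b) 1 0 (-nb 𝒞 par ψ b) (-U.symm v) 0 := by
  ext1
  · funext i
    rcases lt_trichotomy (nb 𝒞 par ψ b i) 0 with hneg | hzero | hpos
    · simp [eMinus, preGminus, hneg, hneg.ne, abs_of_neg]
    · simp [eMinus, preGminus, hzero]
    · simp [eMinus, preGminus, hpos.not_gt, hpos.ne']
  · simp [eMinus, preGminus]

theorem ePlus_eq_preGplus :
    ePlus 𝒞 par ψ b U v = preGplus (nb 𝒞 par ψ b) 1 0 (-nb 𝒞 par ψ b) (-U.symm v) 0 := by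
  ext1
  · funext i
    rcases lt_trichotomy (nb 𝒞 par ψ b i) 0 with hneg | hzero | hpos
    · simp [ePlus, preGplus, hneg, hneg.ne]
    · simp [ePlus, preGplus, hzero]
    · simp [ePlus, preGplus, hpos.not_gt, hpos.ne', abs_of_pos hpos, neg_div]
  · simp [ePlus, preGplus]

theorem Gminus_eq_projWith [Fintype κ] :
    Gminus 𝒞 par j U q ψ b v f d g u eu w =
      projWith (weightedInner (nb 𝒞 par ψ b))
        (preGminus (nb 𝒞 par ψ b) 1 0 (-nb 𝒞 par ψ b) (-U.symm v) 0)
        (preGminus (nb 𝒞 par ψ b) (fun i => (g : C(Y, ℝ)) (q i)) (nfb 𝒞 par j U ψ f d)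
          (duB 𝒞 par j ψ u eu) w (-d - U.symm (par g))) := by
  rw [← eMinus_eq_preGminus]
  rfl

theorem Gplus_eq_projWith [Fintype κ] :
    Gplus 𝒞 par j U q ψ b v f d g u eu w =
      projWith (weightedInner (nb 𝒞 par ψ b))
        (preGplus (nb 𝒞 par ψ b) 1 0 (-nb 𝒞 par ψ b) (-U.symm v) 0)
        (preGplus (nb 𝒞 par ψ b) (fun i => (g : C(Y, ℝ)) (q i)) (nfb 𝒞 par j U ψ f d)
          (duB 𝒞 par j ψ u eu) w (-d - U.symm (par g))) := by
  rw [← ePlus_eq_preGplus]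
  rfl

end FiniteBoundary

theorem stmt_14_general {Y : Type*} [MetricSpace Y]
    {E : Type*} [NormedAddCommGroup E] [InnerProductSpace ℝ E]
    {F : Type*} [NormedAddCommGroup F] [InnerProductSpace ℝ F]
    {κ : Type*} [Fintype κ]
    (𝒞 : Subalgebra ℝ C(Y, ℝ))
    (act : 𝒞 →ₗ[ℝ] E →ₗ[ℝ] E)
    (hact_one : ∀ x, act 1 x = x)
    (hact_symm : ∀ φ x y, ⟪act φ x, y⟫ = ⟪x, act φ y⟫)
    (par : 𝒞 →ₗ[ℝ] E)
    (hLeibniz : ∀ φ χ, par (φ * χ) = act φ (par χ) + act χ (par φ))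
    (q : κ → Y) (b : E)
    (hdivfree : ∀ φ, Vanish 𝒞 (Set.range q) φ → ⟪b, par φ⟫ = 0)
    (j : 𝒞 →ₗ[ℝ] F)
    (hdense : Dense (⇑j '' {φ : 𝒞 | Vanish 𝒞 (Set.range q) φ}))
    (U : F ≃ₗᵢ[ℝ] E) (hU : ∀ φ, U (j φ) = act φ b)
    (h : 𝒞) (v : E) (hb : b = par h + v)
    (ψ : κ → 𝒞)
    (hψ1 : ∀ i, (ψ i : C(Y, ℝ)) (q i) = 1)
    (hψ0 : ∀ i i', i ≠ i' → (ψ i : C(Y, ℝ)) (q i') = 0) :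
    ∀ (f d : F) (g u : 𝒞) (eu w : F),
      KeyRep 𝒞 (Set.range q) par j U f d g u eu w →
      ∃ c : ℝ,
        Gminus 𝒞 par j U q ψ b v f d g u eu w =
          (((fun i => if nb 𝒞 par ψ b i = 0 then
              (Real.sqrt 2)⁻¹ * ((g : C(Y, ℝ)) (q i) + c + nfb 𝒞 par j U ψ f d i)
            else if nb 𝒞 par ψ b i < 0 then
              duB 𝒞 par j ψ u eu i / |nb 𝒞 par ψ b i| + c
            else nfb 𝒞 par j U ψ f d i / |nb 𝒞 par ψ b i|),
            (Real.sqrt 2)⁻¹ • (w - c • U.symm v + (-d - U.symm (par g)))) : (κ → ℝ) × F) ∧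
        Gplus 𝒞 par j U q ψ b v f d g u eu w =
          (((fun i => if nb 𝒞 par ψ b i = 0 then
              (Real.sqrt 2)⁻¹ * ((g : C(Y, ℝ)) (q i) + c - nfb 𝒞 par j U ψ f d i)
            else if nb 𝒞 par ψ b i < 0 then
              nfb 𝒞 par j U ψ f d i / |nb 𝒞 par ψ b i|
            else duB 𝒞 par j ψ u eu i / |nb 𝒞 par ψ b i| - c),
            (Real.sqrt 2)⁻¹ • (w - c • U.symm v - (-d - U.symm (par g)))) : (κ → ℝ) × F) := by
  intro f d g u eu w hrep
  have hnb : ∑ i, nb 𝒞 par ψ b i = 0 :=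
    sum_nb_eq_zero (map_one_eq_zero_of_leibniz hact_one hLeibniz) hdivfree hψ1 hψ0
  have hnfb := hrep.nfb_eq hact_symm hLeibniz hdivfree hdense hU hψ0
  have hduB := hrep.sum_duB_eq_inner hact_one hact_symm hLeibniz hdivfree hdense hU hb hψ1 hψ0
  obtain ⟨c, hminus, hplus⟩ :=
    exists_projWith_preGminus_preGplus_eq_add_smul w hnb hnfb hduB
  exact ⟨c, Gminus_eq_projWith.trans (hminus.trans (preGminus_add_smul ..)),
    Gplus_eq_projWith.trans (hplus.trans (preGplus_add_smul ..))⟩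

/-- **Distinguished representations, general case** (Lemma `distinguished`): for every
`f ∈ D(∂_B^⊥)` with key representation `(d, g, u, eu, w)` and `z := −d − U⁻¹(∂g)`, there is a
single constant `c ∈ ℝ` realizing both orthogonal projections `P₋` and `P₊` simultaneously:
`G₋f = ((1/√2)(g+c+n_B(fb))` on `B̊`, `(du)_B/|n_B b| + c` on `B̌`, `n_B(fb)/|n_B b|` on `B̂`,
`(1/√2)(w − c·U⁻¹v + z))` and `G₊f = ((1/√2)(g+c−n_B(fb))` on `B̊`, `n_B(fb)/|n_B b|` on `B̌`,
`(du)_B/|n_B b| − c` on `B̂`, `(1/√2)(w − c·U⁻¹v − z))`, as equalities in `H̃±`. -/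
theorem stmt_14
    (𝒞 : Subalgebra ℝ C(X, ℝ))
    (act : 𝒞 →ₗ[ℝ] H →ₗ[ℝ] H)
    (hact_one : ∀ v : H, act 1 v = v)
    (hact_symm : ∀ (f : 𝒞) (v w : H), ⟪act f v, w⟫ = ⟪v, act f w⟫)
    (hact_bound : ∀ (f : 𝒞) (v : H), ‖act f v‖ ≤ ‖(f : C(X, ℝ))‖ * ‖v‖)
    (par : 𝒞 →ₗ[ℝ] H)
    (hLeibniz : ∀ f g : 𝒞, par (f * g) = act f (par g) + act g (par f))
    (B : Set X) (hB : IsClosed B)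
    (b : H) (hbne : b ≠ 0)
    (hdivfree : ∀ φ : 𝒞, Vanish 𝒞 B φ → ⟪b, par φ⟫ = 0)
    (j : 𝒞 →ₗ[ℝ] H₀) (hjinj : Function.Injective j)
    (hjdense : Dense (⇑j '' {f : 𝒞 | Vanish 𝒞 B f}))
    (U : H₀ ≃ₗᵢ[ℝ] H) (hU : ∀ f : 𝒞, U (j f) = act f b)
    -- resistance-space laws
    (hconst : ∀ f : 𝒞, par f = 0 ↔ ∃ cst : ℝ, ∀ x : X, (f : C(X, ℝ)) x = cst)
    (hclosedrange : IsClosed ((LinearMap.range par : Submodule ℝ H) : Set H))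
    -- the Hodge decomposition `b = ∂h + v`
    (hh : 𝒞) (v : H) (hHodge : b = par hh + v) (hv : ∀ φ : 𝒞, ⟪v, par φ⟫ = 0)
    -- finite boundary data
    (q : ι → X) (hqinj : Function.Injective q) (hBq : B = Set.range q)
    (ψ : ι → 𝒞)
    (hψ1 : ∀ i, (ψ i : C(X, ℝ)) (q i) = 1)
    (hψ0 : ∀ i i', i ≠ i' → (ψ i : C(X, ℝ)) (q i') = 0)
    (hψharm : ∀ i, ∀ φ : 𝒞, Vanish 𝒞 B φ → ⟪par (ψ i), par φ⟫ = 0) :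
    ∀ (f d : H₀) (g u : 𝒞) (eu w : H₀),
      KeyRep 𝒞 B par j U f d g u eu w →
      ∃ c : ℝ,
        Gminus 𝒞 par j U q ψ b v f d g u eu w =
          (((fun i => if nb 𝒞 par ψ b i = 0 then
              (Real.sqrt 2)⁻¹ * ((g : C(X, ℝ)) (q i) + c + nfb 𝒞 par j U ψ f d i)
            else if nb 𝒞 par ψ b i < 0 then
              duB 𝒞 par j ψ u eu i / |nb 𝒞 par ψ b i| + c
            else nfb 𝒞 par j U ψ f d i / |nb 𝒞 par ψ b i|),
            (Real.sqrt 2)⁻¹ • (w - c • U.symm v + (-d - U.symm (par g)))) : (ι → ℝ) × H₀) ∧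
        Gplus 𝒞 par j U q ψ b v f d g u eu w =
          (((fun i => if nb 𝒞 par ψ b i = 0 then
              (Real.sqrt 2)⁻¹ * ((g : C(X, ℝ)) (q i) + c - nfb 𝒞 par j U ψ f d i)
            else if nb 𝒞 par ψ b i < 0 then
              nfb 𝒞 par j U ψ f d i / |nb 𝒞 par ψ b i|
            else duB 𝒞 par j ψ u eu i / |nb 𝒞 par ψ b i| - c),
            (Real.sqrt 2)⁻¹ • (w - c • U.symm v - (-d - U.symm (par g)))) : (ι → ℝ) × H₀) := by
  subst hBq
  exact stmt_14_general 𝒞 act hact_one hact_symm par hLeibniz q b hdivfree j hjdense U hU hh v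
    hHodge ψ hψ1 hψ0

end Stmt14
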